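/- Let c : ℤ^d → ℤ be a sparse configuration and assume c is annihilated by a product φ_1 ⋯ φ_n of line polynomials φ_1, …, φ_n in pairwise non-parallel directions v_1, …, v_n. Then c = c_1 + … + c_n where, for each i, the function c_i : ℤ^d → ℤ is a finite sum of periodic v_i-fibers and φ_i c_i = 0. -/

import Mathlib

namespace PaperFormal

/-- View an integer vector inside `ℝ^d`. -/
def intVecR {d : ℕ} (u : Fin d → ℤ) : Fin d → ℝ := fun i => (u i : ℝ)

/-- View an integer vector inside `ℚ^d`. -/
def intVecQ {d : ℕ} (u : Fin d → ℤ) : Fin d → ℚ := fun i => (u i : ℚ)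

/-- A (Laurent) polynomial: a finitely supported integer-valued function on `ℤ^d`. -/
def IsPoly {d : ℕ} (f : (Fin d → ℤ) → ℤ) : Prop := (Function.support f).Finite

/-- The product `(fc)(u) = ∑_v f(v) · c(u − v)` of a polynomial `f` with `c : ℤ^d → ℤ`. -/
noncomputable def polyApply {d : ℕ} (f : (Fin d → ℤ) → ℤ) (c : (Fin d → ℤ) → ℤ) :
    (Fin d → ℤ) → ℤ := fun u => ∑ᶠ v, f v * c (u - v)

/-- The product `(fc)(u) = ∑_v f(v) · c(u − v)` of a polynomial `f` with `c : ℤ^d → ℂ`. -/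
noncomputable def polyApplyC {d : ℕ} (f : (Fin d → ℤ) → ℤ) (c : (Fin d → ℤ) → ℂ) :
    (Fin d → ℤ) → ℂ := fun u => ∑ᶠ v, (f v : ℂ) * c (u - v)

/-- `c` is `v`-periodic: `c(u + v) = c(u)` for all `u`. -/
def Periodic {d : ℕ} (c : (Fin d → ℤ) → ℤ) (v : Fin d → ℤ) : Prop := ∀ u, c (u + v) = c u

/-- `c : ℤ^d → ℂ` is `v`-periodic. -/
def PeriodicC {d : ℕ} (c : (Fin d → ℤ) → ℂ) (v : Fin d → ℤ) : Prop := ∀ u, c (u + v) = c u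

/-- `c` is `k`-periodic: it has `k` periods that are linearly independent over `ℚ`. -/
def KPeriodic {d : ℕ} (k : ℕ) (c : (Fin d → ℤ) → ℤ) : Prop :=
  ∃ v : Fin k → (Fin d → ℤ),
    (LinearIndependent ℚ fun i => intVecQ (v i)) ∧ ∀ i, Periodic c (v i)

/-- `c` is strongly periodic: it is `d`-periodic. -/
def StronglyPeriodic {d : ℕ} (c : (Fin d → ℤ) → ℤ) : Prop := KPeriodic d c

/-- `c : ℤ^d → ℂ` is strongly periodic. -/
def StronglyPeriodicC {d : ℕ} (c : (Fin d → ℤ) → ℂ) : Prop :=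
  ∃ v : Fin d → (Fin d → ℤ),
    (LinearIndependent ℚ fun i => intVecQ (v i)) ∧ ∀ i, PeriodicC c (v i)

/-- Two nonzero integer vectors are non-parallel if they are linearly independent over `ℚ`. -/
def NonParallel {d : ℕ} (v w : Fin d → ℤ) : Prop :=
  LinearIndependent ℚ ![intVecQ v, intVecQ w]

/-- A line polynomial in direction `v`: a polynomial whose support contains at least two points
and is contained in `u + ℚv` for some `u ∈ ℤ^d`. -/
def IsLinePoly {d : ℕ} (f : (Fin d → ℤ) → ℤ) (v : Fin d → ℤ) : Prop :=
  IsPoly f ∧ v ≠ 0 ∧ 2 ≤ (Function.support f).ncard ∧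
    ∃ u : Fin d → ℤ, ∀ w ∈ Function.support f, ∃ q : ℚ, intVecQ w = intVecQ u + q • intVecQ v

/-- The difference polynomial `X^v − 1`: value `1` at `v`, value `−1` at `0`, and `0` elsewhere. -/
def diffPoly {d : ℕ} (v : Fin d → ℤ) : (Fin d → ℤ) → ℤ :=
  fun u => if u = v then 1 else if u = 0 then -1 else 0

/-- `c : ℤ^d → ℂ` is periodic in direction `v`: it is `kv`-periodic for some nonzero integer `k`. -/
def PeriodicInDirC {d : ℕ} (c : (Fin d → ℤ) → ℂ) (v : Fin d → ℤ) : Prop :=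
  ∃ k : ℤ, k ≠ 0 ∧ PeriodicC c (k • v)

/-- `c : ℤ^d → ℂ` is `V`-periodic for a linear subspace `V ⊆ ℝ^d`: it is periodic in
direction `v` for every nonzero integer vector `v` lying in `V`. -/
def VPeriodicC {d : ℕ} (V : Submodule ℝ (Fin d → ℝ)) (c : (Fin d → ℤ) → ℂ) : Prop :=
  ∀ v : Fin d → ℤ, v ≠ 0 → intVecR v ∈ V → PeriodicInDirC c v

/-- The discrete cube `C_m + t`. -/
def cube {d : ℕ} (m : ℕ) (t : Fin d → ℤ) : Set (Fin d → ℤ) :=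
  {u | ∀ i, |u i - t i| ≤ (m : ℤ)}

/-- `c : ℤ^d → ℤ` is sparse: for some positive integer `a`,
`|supp(c) ∩ (C_m + t)| ≤ a·m` for all positive `m` and all `t`. -/
def Sparse {d : ℕ} (c : (Fin d → ℤ) → ℤ) : Prop :=
  ∃ a : ℕ, 0 < a ∧ ∀ m : ℕ, 0 < m → ∀ t : Fin d → ℤ,
    (Function.support c ∩ cube m t).ncard ≤ a * m

/-- A `v`-fiber: a function whose support is contained in `w + ℚv` for some `w ∈ ℤ^d`. -/
def IsFiber {d : ℕ} (e : (Fin d → ℤ) → ℤ) (v : Fin d → ℤ) : Prop :=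
  ∃ w : Fin d → ℤ, ∀ x ∈ Function.support e, ∃ q : ℚ, intVecQ x = intVecQ w + q • intVecQ v

/-- `c` is a sum of finitely many periodic `v`-fibers. -/
def FinSumPeriodicFibers {d : ℕ} (v : Fin d → ℤ) (c : (Fin d → ℤ) → ℤ) : Prop :=
  ∃ (r : ℕ) (e : Fin r → ((Fin d → ℤ) → ℤ)), c = ∑ j, e j ∧
    ∀ j, IsFiber (e j) v ∧ ∃ w : Fin d → ℤ, w ≠ 0 ∧ Periodic (e j) w

end PaperFormal

/-!
A bounded function killed by a line polynomial satisfies a two-sided linear recurrence along each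
line in that direction. Only finitely many bounded functions on `ℤ` solve this recurrence, and they
are permuted by the shift, so the function has a period in that direction. If moreover it is sparse,
counting points in large cubes shows that it lives on finitely many lines, hence it is a finite sum
of periodic fibers.

It remains to split `c` into sparse configurations killed by the single `φᵢ`, by induction on `n`.
Let `ψ = φₙ` and `ψ c = f₁ + ⋯ + fₙ₋₁` with `φᵢ fᵢ = 0`, and let `w` be a period of `fᵢ`. As `fⱼ`
for `j ≠ i` lives on finitely many lines transverse to `w`, its translates by `w, 2w, …` tend to
`0`, so those of `ψ c` tend to `fᵢ`, and a limit `F` of the translates of `c` satisfies `ψ F = fᵢ`.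
The difference of `F` and its `w`-translate is killed by `ψ`; passing to the limit once more removes
it, so that `F` becomes `w`-periodic. Then `φᵢ F` is `w`-periodic and killed by `ψ`, hence equal to
its own limit `0`. Subtracting these `F` from `c`, one for each `i < n`, leaves a configuration
killed by `ψ`.
-/

namespace PaperFormal

open Filter Function Set Topology
open scoped translate

/-! ### Lines in `ℤ^d` -/

section Lines

variable {d : ℕ} {v v' w x y : Fin d → ℤ}

/-- The projection of `ℤ^d` along the direction `v`: two points have the same image exactly when
they lie on a common line `u + ℚv`. -/
def lineProj (v : Fin d → ℤ) : (Fin d → ℤ) →ₗ[ℤ] (Fin d → ℚ) ⧸ Submodule.span ℚ {intVecQ v} :=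
  (Submodule.span ℚ {intVecQ v}).mkQ.restrictScalars ℤ ∘ₗ (Algebra.linearMap ℤ ℚ).compLeft (Fin d)

lemma lineProj_eq_iff :
    lineProj v x = lineProj v y ↔ ∃ q : ℚ, intVecQ x = intVecQ y + q • intVecQ v := by
  change Submodule.Quotient.mk (intVecQ x) = Submodule.Quotient.mk (intVecQ y) ↔ _
  simp only [Submodule.Quotient.eq, Submodule.mem_span_singleton, eq_sub_iff_add_eq', eq_comm]

lemma lineProj_eq_zero_iff : lineProj v w = 0 ↔ ∃ q : ℚ, intVecQ w = q • intVecQ v := by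
  have hzero : intVecQ (0 : Fin d → ℤ) = 0 := funext fun _ => Int.cast_zero
  rw [← map_zero (lineProj v), lineProj_eq_iff, hzero]
  simp only [zero_add]

lemma intVecQ_injective : Injective (intVecQ : (Fin d → ℤ) → Fin d → ℚ) := fun _ _ h =>
  funext fun i => Int.cast_injective (congrFun h i)

lemma eq_zero_of_lineProj_eq_zero {k : Fin d} (hk : v k ≠ 0) (hx : lineProj v x = 0)
    (hxk : x k = 0) : x = 0 := by
  obtain ⟨q, hq⟩ := lineProj_eq_zero_iff.1 hx
  have hq0 : q = 0 := by
    simpa [intVecQ, hxk, hk] using congrFun hq k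
  refine intVecQ_injective (hq.trans ?_)
  ext i
  simp [hq0, intVecQ]

lemma NonParallel.lineProj_ne_zero (h : NonParallel v v') (hw : w ≠ 0) (hvw : lineProj v w = 0) :
    lineProj v' w ≠ 0 := by
  intro hvw'
  obtain ⟨q, hq⟩ := lineProj_eq_zero_iff.1 hvw
  obtain ⟨q', hq'⟩ := lineProj_eq_zero_iff.1 hvw'
  have hcomb : q • intVecQ v + (-q') • intVecQ v' = 0 := by
    rw [neg_smul, ← hq, ← hq', add_neg_cancel]
  have hq0 : q = 0 := (LinearIndependent.pair_iff.1 h q (-q') hcomb).1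
  refine hw (intVecQ_injective (hq.trans ?_))
  ext i
  simp [hq0, intVecQ]

lemma isPrincipal_ker_lineProj (hv : v ≠ 0) : (LinearMap.ker (lineProj v)).IsPrincipal := by
  obtain ⟨k, hk⟩ : ∃ k, v k ≠ 0 := Function.ne_iff.1 hv
  -- On the line `ℚv` the `k`-th coordinate is injective, so we may argue with ideals of `ℤ`.
  obtain ⟨g, hg⟩ := IsPrincipalIdealRing.principal
    ((LinearMap.ker (lineProj v)).map (LinearMap.proj k : (Fin d → ℤ) →ₗ[ℤ] ℤ))
  obtain ⟨v₀, hv₀, rfl⟩ : g ∈ (LinearMap.ker (lineProj v)).map (LinearMap.proj k) :=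
    hg ▸ Submodule.mem_span_singleton_self g
  refine ⟨v₀, le_antisymm (fun x hx => ?_) ((Submodule.span_singleton_le_iff_mem _ _).2 hv₀)⟩
  obtain ⟨m, hm⟩ := Submodule.mem_span_singleton.1 (hg ▸ Submodule.mem_map_of_mem hx)
  have hdiff : m • v₀ - x = 0 := by
    refine eq_zero_of_lineProj_eq_zero hk ?_ ?_
    · exact Submodule.sub_mem _ (Submodule.smul_mem _ m hv₀) hx
    · exact sub_eq_zero.2 hm
  exact Submodule.mem_span_singleton.2 ⟨m, sub_eq_zero.1 hdiff⟩

lemma IsLinePoly.exists_support_subset_range {φ : (Fin d → ℤ) → ℤ} (hφ : IsLinePoly φ v) :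
    ∃ u v₀ : Fin d → ℤ, v₀ ≠ 0 ∧ lineProj v v₀ = 0 ∧
      support φ ⊆ range fun j : ℤ => u + j • v₀ := by
  obtain ⟨-, hv, -, u, hu⟩ := hφ
  obtain ⟨v₀, hker⟩ := isPrincipal_ker_lineProj hv
  have hgen (x) : lineProj v x = 0 ↔ ∃ m : ℤ, m • v₀ = x := by
    rw [← LinearMap.mem_ker, hker, Submodule.mem_span_singleton]
  refine ⟨u, v₀, ?_, (hgen v₀).2 ⟨1, one_smul ℤ v₀⟩, fun x hx => ?_⟩
  · rintro rfl
    obtain ⟨m, hm⟩ := (hgen v).1 (lineProj_eq_zero_iff.2 ⟨1, (one_smul ℚ _).symm⟩)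
    exact hv (by rw [← hm, smul_zero])
  · obtain ⟨m, hm⟩ := (hgen (x - u)).1 (by rw [map_sub, lineProj_eq_iff.2 (hu x hx), sub_self])
    exact ⟨m, by simp only [hm, add_sub_cancel]⟩

end Lines

/-! ### Two-sided linear recurrences -/

section Recurrences

lemma eq_zero_of_recurrence {R : Type*} [NonUnitalNonAssocSemiring R] [NoZeroDivisors R]
    {a g : ℤ → R} {s t m : ℤ} (hs : IsLeast (support a) s) (ht : IsGreatest (support a) t)
    (hrec : ∀ n, ∑ᶠ j, a j * g (n - j) = 0) (hm : ∀ k ∈ Ico m (m + (t - s)), g k = 0) :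
    g = 0 := by
  -- Isolating the extreme coefficient at `i` in the recurrence solves for one further value.
  have solve (i n : ℤ) (hi : a i ≠ 0) (hn : ∀ j ∈ Icc s t, j ≠ i → g (n - j) = 0) :
      g (n - i) = 0 := by
    have hsum := hrec n
    rw [finsum_eq_single _ i] at hsum
    · exact (mul_eq_zero.1 hsum).resolve_left hi
    · intro j hji
      by_cases haj : a j = 0
      · rw [haj, zero_mul]
      · rw [hn j ⟨hs.2 haj, ht.2 haj⟩ hji, mul_zero]
  have right (m : ℤ) (hm : ∀ k ∈ Ico m (m + (t - s)), g k = 0) : g (m + (t - s)) = 0 := by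
    rw [← add_sub_assoc]
    exact solve s (m + t) hs.1 fun j hj hjs => hm _ (by grind)
  have left (m : ℤ) (hm : ∀ k ∈ Ico m (m + (t - s)), g k = 0) : g (m - 1) = 0 := by
    have h := solve t (m - 1 + t) ht.1 fun j hj hjt => hm _ (by grind)
    rwa [add_sub_cancel_right] at h
  have window (i : ℤ) : ∀ k ∈ Ico i (i + (t - s)), g k = 0 := by
    induction i using Int.inductionOn' (b := m) with
    | zero => exact hm
    | succ i _ ih =>
      intro k hk
      obtain rfl | hne := eq_or_ne k (i + (t - s))
      · exact right i ih
      · exact ih k (by grind)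
    | pred i _ ih =>
      intro k hk
      obtain rfl | hne := eq_or_ne k (i - 1)
      · exact left i ih
      · exact ih k (by grind)
  ext n
  simpa using right (n - (t - s)) (window _)

lemma exists_common_period {α : Type*} {S : Set (ℤ → α)} (hS : S.Finite)
    (hshift : ∀ f ∈ S, (fun n => f (n + 1)) ∈ S) :
    ∃ P : ℕ, 0 < P ∧ ∀ f ∈ S, Function.Periodic f P := by
  have : Finite S := hS
  let shift : S → S := fun f => ⟨fun n => f.1 (n + 1), hshift f f.2⟩
  have hinj : Injective shift := by
    intro f g hfg
    ext n
    simpa [shift] using congrFun (congrArg Subtype.val hfg) (n - 1)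
  have hiter (k : ℕ) (f : S) (n : ℤ) : (shift^[k] f).1 n = f.1 (n + k) := by
    induction k generalizing n with
    | zero => simp
    | succ k ih =>
      rw [iterate_succ_apply']
      simp only [shift, ih, Nat.cast_succ, add_assoc, add_comm (1 : ℤ)]
  let σ : Equiv.Perm S := Equiv.ofBijective shift (Finite.injective_iff_bijective.1 hinj)
  refine ⟨orderOf σ, orderOf_pos σ, fun f hf n => ?_⟩
  have hσ : shift^[orderOf σ] ⟨f, hf⟩ = ⟨f, hf⟩ := by
    change (⇑σ)^[orderOf σ] ⟨f, hf⟩ = ⟨f, hf⟩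
    rw [Equiv.Perm.iterate_eq_pow, pow_orderOf_eq_one, Equiv.Perm.one_apply]
  calc f (n + orderOf σ) = (shift^[orderOf σ] ⟨f, hf⟩).1 n := (hiter _ ⟨f, hf⟩ n).symm
    _ = f n := by rw [hσ]

lemma finite_setOf_recurrence {R : Type*} [NonUnitalNonAssocRing R] [NoZeroDivisors R] {a : ℤ → R}
    (ha : (support a).Finite) (hne : (support a).Nonempty) {A : Set R} (hA : A.Finite) :
    {f : ℤ → R | (∀ n, f n ∈ A) ∧ ∀ n, ∑ᶠ j, a j * f (n - j) = 0}.Finite := by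
  have hne' : ha.toFinset.Nonempty := ha.toFinset_nonempty.2 hne
  obtain ⟨s, hs⟩ : ∃ s, IsLeast (support a) s :=
    ⟨_, by simpa using ha.toFinset.isLeast_min' hne'⟩
  obtain ⟨t, ht⟩ : ∃ t, IsGreatest (support a) t :=
    ⟨_, by simpa using ha.toFinset.isGreatest_max' hne'⟩
  have hwindows : {p : Ico (0 : ℤ) (t - s) → R | ∀ k, p k ∈ A}.Finite := Set.Finite.pi' fun _ => hA
  have hmaps : MapsTo (Ico (0 : ℤ) (t - s)).domRestrict
      {f : ℤ → R | (∀ n, f n ∈ A) ∧ ∀ n, ∑ᶠ j, a j * f (n - j) = 0} {p | ∀ k, p k ∈ A} :=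
    fun f hf k => hf.1 k
  refine hwindows.of_injOn hmaps ?_
  intro f hf g hg hfg
  have hsupp (h : ℤ → R) (n : ℤ) : HasFiniteSupport fun j => a j * h (n - j) :=
    ha.subset fun j hj => left_ne_zero_of_mul hj
  refine sub_eq_zero.1 (eq_zero_of_recurrence (m := 0) hs ht (fun n => ?_) fun k hk => ?_)
  · simp only [Pi.sub_apply, mul_sub]
    rw [finsum_sub_distrib (hsupp f n) (hsupp g n), hf.2, hg.2, sub_zero]
  · rw [zero_add] at hk
    exact sub_eq_zero.2 (congrFun hfg ⟨k, hk⟩)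

lemma exists_common_period_of_recurrence {R : Type*} [NonUnitalNonAssocRing R] [NoZeroDivisors R]
    {a : ℤ → R} (ha : (support a).Finite) (hne : (support a).Nonempty) {A : Set R}
    (hA : A.Finite) :
    ∃ P : ℕ, 0 < P ∧ ∀ f : ℤ → R, (∀ n, f n ∈ A) → (∀ n, ∑ᶠ j, a j * f (n - j) = 0) →
      Function.Periodic f P := by
  obtain ⟨P, hP, hper⟩ := exists_common_period (finite_setOf_recurrence ha hne hA) fun f hf =>
    ⟨fun n => hf.1 _, fun n => by simpa only [sub_add_eq_add_sub] using hf.2 (n + 1)⟩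
  exact ⟨P, hP, fun f hfA hf => hper f ⟨hfA, hf⟩⟩

end Recurrences

/-! ### The action of polynomials on configurations -/

section PolyApply

variable {d : ℕ} {f g : (Fin d → ℤ) → ℤ}

lemma polyApply_eq_sum_translate (hf : IsPoly f) (c : (Fin d → ℤ) → ℤ) :
    polyApply f c = ∑ v ∈ hf.toFinset, f v • τ v c := by
  ext u
  rw [polyApply, finsum_eq_sum_of_support_subset (s := hf.toFinset)]
  · simp
  · exact fun v hv => (hf.mem_toFinset).2 (left_ne_zero_of_mul hv)

lemma polyApply_sub (hf : IsPoly f) (c c' : (Fin d → ℤ) → ℤ) :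
    polyApply f (c - c') = polyApply f c - polyApply f c' := by
  simp only [polyApply_eq_sum_translate hf, translate_sub_right, smul_sub, Finset.sum_sub_distrib]

lemma polyApply_sum (hf : IsPoly f) {ι : Type*} (s : Finset ι) (c : ι → (Fin d → ℤ) → ℤ) :
    polyApply f (∑ i ∈ s, c i) = ∑ i ∈ s, polyApply f (c i) := by
  simp only [polyApply_eq_sum_translate hf, translate_sum_right, Finset.smul_sum]
  exact Finset.sum_comm

lemma polyApply_translate (hf : IsPoly f) (w : Fin d → ℤ) (c : (Fin d → ℤ) → ℤ) :
    polyApply f (τ w c) = τ w (polyApply f c) := by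
  simp only [polyApply_eq_sum_translate hf, translate_sum_right, translate_smul_right,
    translate_comm w]

lemma polyApply_comm (hf : IsPoly f) (hg : IsPoly g) (c : (Fin d → ℤ) → ℤ) :
    polyApply f (polyApply g c) = polyApply g (polyApply f c) := by
  rw [polyApply_eq_sum_translate hf, polyApply_eq_sum_translate hf c, polyApply_sum hg]
  refine Finset.sum_congr rfl fun v _ => ?_
  rw [← polyApply_translate hg]
  simp only [polyApply_eq_sum_translate hg, Finset.smul_sum, translate_smul_right, smul_comm (f v)]

lemma polyApply_mem {S : AddSubgroup ((Fin d → ℤ) → ℤ)} (hS : ∀ c ∈ S, ∀ v, τ v c ∈ S)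
    (hf : IsPoly f) {c : (Fin d → ℤ) → ℤ} (hc : c ∈ S) : polyApply f c ∈ S := by
  rw [polyApply_eq_sum_translate hf]
  exact S.sum_mem fun v _ => S.zsmul_mem (hS c hc v) (f v)

lemma continuous_translate {G α : Type*} [AddCommGroup G] [TopologicalSpace α] (v : G) :
    Continuous (τ v : (G → α) → G → α) :=
  continuous_pi fun u => continuous_apply (u - v)

lemma continuous_polyApply (hf : IsPoly f) : Continuous (polyApply f) := by
  rw [funext (polyApply_eq_sum_translate hf)]
  exact continuous_finsetSum _ fun v _ => (continuous_translate v).const_smul (f v)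

lemma polyApply_eq_finsum_line {u v : Fin d → ℤ} (hv : v ≠ 0)
    (hf : support f ⊆ range fun j : ℤ => u + j • v) (c : (Fin d → ℤ) → ℤ) (x : Fin d → ℤ) (n : ℤ) :
    polyApply f c (x + n • v + u) = ∑ᶠ j : ℤ, f (u + j • v) * c (x + (n - j) • v) := by
  have hinj : Injective fun j : ℤ => u + j • v :=
    (add_right_injective u).comp (smul_left_injective ℤ hv)
  calc polyApply f c (x + n • v + u)
      = ∑ᶠ y ∈ range fun j : ℤ => u + j • v, f y * c (x + n • v + u - y) := by
        rw [polyApply, ← finsum_mem_univ]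
        exact finsum_mem_inter_support_eq' _ _ _ fun y hy =>
          iff_of_true trivial (hf (left_ne_zero_of_mul hy))
    _ = ∑ᶠ j : ℤ, f (u + j • v) * c (x + n • v + u - (u + j • v)) := finsum_mem_range hinj
    _ = ∑ᶠ j : ℤ, f (u + j • v) * c (x + (n - j) • v) :=
        finsum_congr fun j => by congr 2; module

lemma periodic_iff_translate_eq {c : (Fin d → ℤ) → ℤ} {w : Fin d → ℤ} :
    Periodic c w ↔ τ w c = c := by
  refine ⟨fun h => funext fun u => ?_, fun h u => ?_⟩
  · simpa using (h (u - w)).symm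
  · simpa using (congrFun h (u + w)).symm

lemma IsLinePoly.exists_period {c φ : (Fin d → ℤ) → ℤ} {v : Fin d → ℤ} (hφ : IsLinePoly φ v)
    (hc : (range c).Finite) (h : polyApply φ c = 0) :
    ∃ w ≠ 0, lineProj v w = 0 ∧ Periodic c w := by
  obtain ⟨u, v₀, hv₀, hvv₀, hsub⟩ := hφ.exists_support_subset_range
  have hinj : Injective fun j : ℤ => u + j • v₀ :=
    (add_right_injective u).comp (smul_left_injective ℤ hv₀)
  have hfin : (support fun j : ℤ => φ (u + j • v₀)).Finite := hφ.1.preimage hinj.injOn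
  have hne : (support fun j : ℤ => φ (u + j • v₀)).Nonempty := by
    obtain ⟨x, hx⟩ : (support φ).Nonempty :=
      nonempty_of_ncard_ne_zero (by have := hφ.2.2.1; omega)
    obtain ⟨j, rfl⟩ := hsub hx
    exact ⟨j, hx⟩
  obtain ⟨P, hP, hper⟩ := exists_common_period_of_recurrence hfin hne hc
  refine ⟨P • v₀, smul_ne_zero hP.ne' hv₀, by rw [map_nsmul, hvv₀, smul_zero], fun x => ?_⟩
  have hline := hper (fun n => c (x + n • v₀)) (fun n => mem_range_self _)
    (fun n => by rw [← polyApply_eq_finsum_line hv₀ hsub, h, Pi.zero_apply]) 0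
  simpa using hline

end PolyApply

/-! ### Sparse configurations -/

section Sparse

variable {d : ℕ} {c : (Fin d → ℤ) → ℤ}

lemma finite_cube (m : ℕ) (t : Fin d → ℤ) : (cube m t).Finite :=
  (finite_Icc (fun i => t i - m) (fun i => t i + m)).subset fun _ hu =>
    ⟨fun i => sub_le_of_abs_sub_le_left (hu i), fun i => sub_le_iff_le_add'.1 (abs_le.1 (hu i)).2⟩

lemma exists_subset_cube {s : Set (Fin d → ℤ)} (hs : s.Finite) :
    ∃ m : ℕ, 0 < m ∧ s ⊆ cube m 0 := by
  obtain ⟨m, hm⟩ := (hs.image fun x => ∑ i, |x i|).bddAbove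
  refine ⟨m.toNat + 1, Nat.succ_pos _, fun x hx i => ?_⟩
  have hxm : ∑ i, |x i| ≤ m := hm (mem_image_of_mem _ hx)
  have hxi : |x i| ≤ ∑ i, |x i| :=
    Finset.single_le_sum (fun i _ => abs_nonneg (x i)) (Finset.mem_univ i)
  rw [Pi.zero_apply, sub_zero]
  omega

lemma add_nsmul_mem_cube {m r k t : ℕ} {x w : Fin d → ℤ} (hx : x ∈ cube m 0) (hw : w ∈ cube r 0)
    (ht : t ≤ k) : x + t • w ∈ cube (m + k * r) 0 := by
  intro i
  have hxi : |x i| ≤ m := by simpa using hx i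
  have hwi : |w i| ≤ r := by simpa using hw i
  calc |(x + t • w) i - (0 : Fin d → ℤ) i| = |x i + t * w i| := by simp
    _ ≤ |x i| + t * |w i| := by
        simpa only [abs_mul, Nat.abs_cast] using abs_add_le (x i) (t * w i)
    _ ≤ m + k * r := by gcongr
    _ = ((m + k * r : ℕ) : ℤ) := by push_cast; rfl

lemma ncard_support_translate_inter_cube (c : (Fin d → ℤ) → ℤ) (v t : Fin d → ℤ) (m : ℕ) :
    (support (τ v c) ∩ cube m t).ncard = (support c ∩ cube m (t - v)).ncard := by
  have hpre : support (τ v c) ∩ cube m t = (· - v) ⁻¹' (support c ∩ cube m (t - v)) := by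
    ext x
    simp only [cube, mem_inter_iff, mem_support, translate_apply, mem_ofPred_eq, mem_preimage,
      Pi.sub_apply, sub_sub_sub_cancel_right]
  rw [hpre]
  exact ncard_preimage_of_injective_subset_range sub_left_injective
    fun x _ => (Equiv.subRight v).surjective x

lemma Sparse.translate (hc : Sparse c) (v : Fin d → ℤ) : Sparse (τ v c) := by
  obtain ⟨a, ha, hbound⟩ := hc
  refine ⟨a, ha, fun m hm t => ?_⟩
  rw [ncard_support_translate_inter_cube]
  exact hbound m hm _

lemma Sparse.add {c c' : (Fin d → ℤ) → ℤ} (hc : Sparse c) (hc' : Sparse c') :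
    Sparse (c + c') := by
  obtain ⟨a, ha, hbound⟩ := hc
  obtain ⟨a', -, hbound'⟩ := hc'
  refine ⟨a + a', by omega, fun m hm t => ?_⟩
  calc (support (c + c') ∩ cube m t).ncard
      ≤ (support c ∩ cube m t ∪ support c' ∩ cube m t).ncard := by
        rw [← union_inter_distrib_right]
        exact ncard_le_ncard (inter_subset_inter_left _ (support_add c c'))
          ((finite_cube m t).inter_of_right _)
    _ ≤ a * m + a' * m :=
        (ncard_union_le _ _).trans (add_le_add (hbound m hm t) (hbound' m hm t))
    _ = (a + a') * m := (add_mul a a' m).symm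

/-- The group of sparse configurations: sparse functions with finitely many values. -/
def sparseConfigs (d : ℕ) : AddSubgroup ((Fin d → ℤ) → ℤ) where
  carrier := {c | (range c).Finite ∧ Sparse c}
  zero_mem' := ⟨finite_range_const, 1, one_pos, by simp⟩
  add_mem' hc hc' := ⟨(hc.1.add hc'.1).subset (range_subset_iff.2 fun u =>
    add_mem_add (mem_range_self u) (mem_range_self u)), hc.2.add hc'.2⟩
  neg_mem' {c} hc := ⟨hc.1.neg.subset (range_subset_iff.2 fun u =>
    neg_mem_neg.2 (mem_range_self u)), by simpa only [Sparse, support_neg] using hc.2⟩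

lemma translate_mem_sparseConfigs (hc : c ∈ sparseConfigs d) (v : Fin d → ℤ) :
    τ v c ∈ sparseConfigs d :=
  ⟨hc.1.subset (range_comp_subset_range (· - v) c), hc.2.translate v⟩

lemma polyApply_mem_sparseConfigs {f : (Fin d → ℤ) → ℤ} (hf : IsPoly f)
    (hc : c ∈ sparseConfigs d) : polyApply f c ∈ sparseConfigs d :=
  polyApply_mem (fun _ h v => translate_mem_sparseConfigs h v) hf hc

lemma ncard_mul_le_of_periodic {Q : Type*} [AddCommGroup Q] {π : (Fin d → ℤ) →ₗ[ℤ] Q}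
    {w : Fin d → ℤ} (hw : w ≠ 0) (hπw : π w = 0) (hper : Periodic c w) {T : Set (Fin d → ℤ)}
    (hTc : T ⊆ support c) (hT : InjOn π T) {M V : ℕ} (hM : T ⊆ cube M 0) (hV : w ∈ cube V 0)
    (r : ℕ) : T.ncard * (r + 1) ≤ (support c ∩ cube (M + r * V) 0).ncard := by
  rw [← Nat.card_Iic r, ← ncard_coe_finset, ← ncard_prod, Finset.coe_Iic]
  refine ncard_le_ncard_of_injOn (fun p => p.1 + p.2 • w) ?_ ?_
    ((finite_cube _ _).inter_of_right _)
  · rintro ⟨x, t⟩ ⟨hx, ht⟩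
    have hxt : c (x + t • w) = c x := Function.Periodic.nsmul hper t x
    exact ⟨hxt.trans_ne (hTc hx), add_nsmul_mem_cube (hM hx) hV ht⟩
  · rintro ⟨x, t⟩ ⟨hx, -⟩ ⟨y, t'⟩ ⟨hy, -⟩ (heq : x + t • w = y + t' • w)
    have hπ : π x = π y := by
      simpa only [map_add, map_nsmul, hπw, smul_zero, add_zero] using congrArg π heq
    obtain rfl : x = y := hT hx hy hπ
    have hinj : Injective fun n : ℕ => n • w :=
      injective_nsmul_iff_not_isOfFinAddOrder.2 (not_isOfFinAddOrder_of_isAddTorsionFree hw)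
    rw [hinj (add_left_cancel heq)]

lemma Sparse.finite_image_support {Q : Type*} [AddCommGroup Q] {π : (Fin d → ℤ) →ₗ[ℤ] Q}
    {w : Fin d → ℤ} (hw : w ≠ 0) (hπw : π w = 0) (hc : Sparse c) (hper : Periodic c w) :
    (π '' support c).Finite := by
  obtain ⟨a, -, hbound⟩ := hc
  obtain ⟨V, -, hV⟩ := exists_subset_cube (finite_singleton w)
  obtain ⟨S, hSc, hS⟩ := exists_subset_bijOn (support c) π
  by_contra hinf
  have hSinf : S.Infinite := fun hfin => hinf (hS.image_eq ▸ hfin.image π)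
  -- For `r = a * M`, the translates by `0, w, …, r • w` of `a * V + 1` points with distinct images
  -- are too many for their cube.
  obtain ⟨T, hTS, hTfin, hTcard⟩ := hSinf.exists_subset_ncard_eq (a * V + 1)
  obtain ⟨M, hMpos, hM⟩ := exists_subset_cube hTfin
  have hlower := ncard_mul_le_of_periodic hw hπw hper (hTS.trans hSc) (hS.injOn.mono hTS) hM
    (singleton_subset_iff.1 hV) (a * M)
  have hupper := hbound (M + a * M * V) (by positivity) 0
  rw [hTcard] at hlower
  nlinarith

lemma IsLinePoly.finite_lines {φ : (Fin d → ℤ) → ℤ} {v : Fin d → ℤ} (hφ : IsLinePoly φ v)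
    (hc : c ∈ sparseConfigs d) (h : polyApply φ c = 0) : (lineProj v '' support c).Finite := by
  obtain ⟨w, hw, hvw, hper⟩ := hφ.exists_period hc.1 h
  exact hc.2.finite_image_support hw hvw hper

end Sparse

/-! ### Limits of translates -/

section Limits

variable {G α : Type*} [AddCommGroup G] [TopologicalSpace α] {w : G} {f F : G → α}

/-- `F` is the pointwise limit, along the fixed ultrafilter `hyperfilter ℕ`, of the translates of
`f` by `0, w, 2w, …`. The ultrafilter makes limits compatible with each other without passing to
subsequences. -/
def IsTranslateLimit (w : G) (f F : G → α) : Prop :=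
  Tendsto (fun t : ℕ => τ (t • w) f) (hyperfilter ℕ) (𝓝 F)

lemma exists_isTranslateLimit (w : G) (hf : (range f).Finite) :
    ∃ F, IsTranslateLimit w f F := by
  have hcompact : IsCompact (univ.pi fun _ : G => range f) :=
    isCompact_univ_pi fun _ => hf.isCompact
  obtain ⟨F, -, hF⟩ := hcompact.ultrafilter_le_nhds
    ((hyperfilter ℕ).map fun t : ℕ => τ (t • w) f)
    (tendsto_principal.2 (Eventually.of_forall fun t u _ => mem_range_self (u - t • w)))
  exact ⟨F, hF⟩

lemma IsTranslateLimit.unique [T2Space α] {F' : G → α} (h : IsTranslateLimit w f F)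
    (h' : IsTranslateLimit w f F') : F = F' :=
  tendsto_nhds_unique h h'

lemma IsTranslateLimit.translate (h : IsTranslateLimit w f F) (v : G) :
    IsTranslateLimit w (τ v f) (τ v F) := by
  have hcomm (t : ℕ) : τ (t • w) (τ v f) = τ v (τ (t • w) f) := translate_comm _ _ _
  simp only [IsTranslateLimit, hcomm]
  exact ((continuous_translate v).tendsto F).comp h

lemma isTranslateLimit_self (h : τ w f = f) : IsTranslateLimit w f f := by
  have hmul (t : ℕ) : τ (t • w) f = f := by
    induction t with
    | zero => rw [zero_smul, translate_zero]
    | succ t ih => rw [succ_nsmul, translate_add, h, ih]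
  simpa only [IsTranslateLimit, hmul] using tendsto_const_nhds

lemma IsTranslateLimit.exists_eqOn [DiscreteTopology α] (h : IsTranslateLimit w f F) {s : Set G}
    (hs : s.Finite) : ∃ t : ℕ, EqOn F (τ (t • w) f) s := by
  have hpointwise (u : G) : ∀ᶠ t : ℕ in hyperfilter ℕ, F u = τ (t • w) f u := by
    have hu := tendsto_pi_nhds.1 h u
    rw [nhds_discrete, tendsto_pure] at hu
    exact hu.mono fun t ht => ht.symm
  exact ((eventually_all_finite hs).2 fun u _ => hpointwise u).exists

lemma isTranslateLimit_zero [Zero α] {Q : Type*} [AddCommGroup Q] [IsAddTorsionFree Q]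
    {π : G →ₗ[ℤ] Q} (hf : (π '' support f).Finite) (hw : π w ≠ 0) : IsTranslateLimit w f 0 := by
  refine tendsto_pi_nhds.2 fun u => tendsto_nhds_of_eventually_eq ?_
  have hinj : Injective fun t : ℕ => π (u - t • w) := fun t t' h => by
    simp only [map_sub, map_nsmul, sub_right_inj] at h
    exact injective_nsmul_iff_not_isOfFinAddOrder.2
      (not_isOfFinAddOrder_of_isAddTorsionFree hw) h
  have hfin : {t : ℕ | f (u - t • w) ≠ 0}.Finite :=
    hf.of_injOn (fun t ht => mem_image_of_mem π ht) hinj.injOn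
  filter_upwards [hfin.compl_mem_hyperfilter] with t ht
  exact not_not.1 ht

end Limits

section LimitsOfConfigs

variable {d : ℕ} {c C φ ψ : (Fin d → ℤ) → ℤ} {v w : Fin d → ℤ}

lemma IsTranslateLimit.polyApply (h : IsTranslateLimit w c C) (hφ : IsPoly φ) :
    IsTranslateLimit w (polyApply φ c) (polyApply φ C) := by
  simp only [IsTranslateLimit, ← polyApply_translate hφ]
  exact ((continuous_polyApply hφ).tendsto C).comp h

lemma IsTranslateLimit.mem_sparseConfigs (h : IsTranslateLimit w c C)
    (hc : c ∈ sparseConfigs d) : C ∈ sparseConfigs d := by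
  obtain ⟨hrange, a, ha, hbound⟩ := hc
  refine ⟨hrange.subset (range_subset_iff.2 fun u => ?_), a, ha, fun m hm s => ?_⟩
  · obtain ⟨t, ht⟩ := h.exists_eqOn (finite_singleton u)
    exact ht rfl ▸ mem_range_self _
  · obtain ⟨t, ht⟩ := h.exists_eqOn (finite_cube m s)
    have hsupp : support C ∩ cube m s = support (τ (t • w) c) ∩ cube m s := by
      ext u
      exact and_congr_left fun hu => by rw [mem_support, mem_support, ht hu]
    rw [hsupp, ncard_support_translate_inter_cube]
    exact hbound m hm _

lemma isTranslateLimit_zero_of_polyApply_eq_zero (hψ : IsLinePoly ψ v) (hc : c ∈ sparseConfigs d)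
    (h : polyApply ψ c = 0) (hw : lineProj v w ≠ 0) : IsTranslateLimit w c 0 :=
  have : IsAddTorsionFree ((Fin d → ℚ) ⧸ Submodule.span ℚ {intVecQ v}) :=
    .of_isTorsionFree ℚ _
  isTranslateLimit_zero (hψ.finite_lines hc h) hw

end LimitsOfConfigs

/-! ### The decomposition -/

section Decomposition

variable {d : ℕ} {c φ ψ : (Fin d → ℤ) → ℤ} {v w : Fin d → ℤ}

lemma exists_common_solution (hψ : IsLinePoly ψ v) (hφ : IsPoly φ) (hc : c ∈ sparseConfigs d)
    (hw : lineProj v w ≠ 0) {f : (Fin d → ℤ) → ℤ} (hf : Periodic f w)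
    (hlim : IsTranslateLimit w (polyApply ψ c) f) (hφf : polyApply φ f = 0) :
    ∃ F ∈ sparseConfigs d, polyApply ψ F = f ∧ polyApply φ F = 0 := by
  rw [periodic_iff_translate_eq] at hf
  obtain ⟨F₁, hF₁⟩ := exists_isTranslateLimit w hc.1
  have hF₁mem := hF₁.mem_sparseConfigs hc
  have hψF₁ : polyApply ψ F₁ = f := (hF₁.polyApply hψ.1).unique hlim
  -- `F₁` may fail to be `w`-periodic, but only by a function that a second limit kills.
  obtain ⟨F, hF⟩ := exists_isTranslateLimit w hF₁mem.1
  have hFmem := hF.mem_sparseConfigs hF₁mem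
  have hψF : polyApply ψ F = f :=
    (hψF₁ ▸ hF.polyApply hψ.1).unique (isTranslateLimit_self hf)
  have hFper : τ w F = F := by
    have hdefect : polyApply ψ (τ w F₁ - F₁) = 0 := by
      rw [polyApply_sub hψ.1, polyApply_translate hψ.1, hψF₁, hf, sub_self]
    have hzero := isTranslateLimit_zero_of_polyApply_eq_zero hψ
      (sub_mem (translate_mem_sparseConfigs hF₁mem w) hF₁mem) hdefect hw
    exact sub_eq_zero.1 (tendsto_nhds_unique ((hF.translate w).sub hF) hzero)
  refine ⟨F, hFmem, hψF, ?_⟩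
  have hkilled : polyApply ψ (polyApply φ F) = 0 := by
    rw [polyApply_comm hψ.1 hφ, hψF, hφf]
  have hper : τ w (polyApply φ F) = polyApply φ F := by
    rw [← polyApply_translate hφ, hFper]
  exact (isTranslateLimit_self hper).unique (isTranslateLimit_zero_of_polyApply_eq_zero hψ
    (polyApply_mem_sparseConfigs hφ hFmem) hkilled hw)

lemma isTranslateLimit_sum {ι : Type*} [Fintype ι] {cs φ : ι → (Fin d → ℤ) → ℤ}
    {v : ι → Fin d → ℤ} (hline : ∀ i, IsLinePoly (φ i) (v i))
    (hmem : ∀ i, cs i ∈ sparseConfigs d) (hann : ∀ i, polyApply (φ i) (cs i) = 0) {i : ι}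
    (hper : Periodic (cs i) w) (hw : ∀ j ≠ i, lineProj (v j) w ≠ 0) :
    IsTranslateLimit w (∑ j, cs j) (cs i) := by
  classical
  have hlim (j : ι) : IsTranslateLimit w (cs j) (if j = i then cs i else 0) := by
    obtain rfl | hji := eq_or_ne j i
    · rw [if_pos rfl]
      exact isTranslateLimit_self (periodic_iff_translate_eq.1 hper)
    · rw [if_neg hji]
      exact isTranslateLimit_zero_of_polyApply_eq_zero (hline j) (hmem j) (hann j) (hw j hji)
  have hsum := tendsto_finsetSum Finset.univ fun j _ => hlim j
  simpa only [IsTranslateLimit, translate_sum_right, Finset.sum_ite_eq', Finset.mem_univ,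
    if_true] using hsum

theorem exists_sum_of_polyApply_foldr_eq_zero {n : ℕ} {φ : Fin n → (Fin d → ℤ) → ℤ}
    {v : Fin n → Fin d → ℤ} (hline : ∀ i, IsLinePoly (φ i) (v i))
    (hnp : ∀ i j, i ≠ j → NonParallel (v i) (v j)) (hc : c ∈ sparseConfigs d)
    (hann : (List.ofFn φ).foldr polyApply c = 0) :
    ∃ cs : Fin n → (Fin d → ℤ) → ℤ, c = ∑ i, cs i ∧
      ∀ i, cs i ∈ sparseConfigs d ∧ polyApply (φ i) (cs i) = 0 := by
  induction n generalizing c with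
  | zero => exact ⟨fun _ => 0, by simpa using hann, fun i => i.elim0⟩
  | succ n ih =>
    rw [List.ofFn_succ', List.concat_eq_append, List.foldr_append, List.foldr_cons,
      List.foldr_nil] at hann
    set ψ := φ (Fin.last n)
    have hψ : IsLinePoly ψ (v (Fin.last n)) := hline _
    obtain ⟨fs, hfs, hfs'⟩ := ih (fun i => hline i.castSucc)
      (fun i j hij => hnp _ _ ((Fin.castSucc_injective n).ne hij))
      (polyApply_mem_sparseConfigs hψ.1 hc) hann
    choose hfmem hfann using hfs'
    have hlift (i : Fin n) :
        ∃ F ∈ sparseConfigs d, polyApply ψ F = fs i ∧ polyApply (φ i.castSucc) F = 0 := by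
      obtain ⟨w, hw, hvw, hper⟩ := (hline i.castSucc).exists_period (hfmem i).1 (hfann i)
      have htransverse (j : Fin (n + 1)) (hj : j ≠ i.castSucc) : lineProj (v j) w ≠ 0 :=
        (hnp _ _ hj.symm).lineProj_ne_zero hw hvw
      refine exists_common_solution hψ (hline _).1 hc (htransverse _ (Fin.castSucc_ne_last i).symm)
        hper ?_ (hfann i)
      rw [hfs]
      exact isTranslateLimit_sum (fun j => hline j.castSucc) hfmem hfann hper
        fun j hj => htransverse _ ((Fin.castSucc_injective n).ne hj)
    choose Fs hFmem hψF hFann using hlift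
    have hrest : polyApply ψ (c - ∑ i, Fs i) = 0 := by
      simp only [polyApply_sub hψ.1, polyApply_sum hψ.1, hψF, ← hfs, sub_self]
    refine ⟨Fin.snoc (α := fun _ => (Fin d → ℤ) → ℤ) Fs (c - ∑ i, Fs i), ?_,
      Fin.lastCases ?_ fun i => ?_⟩
    · simp only [Fin.sum_univ_castSucc, Fin.snoc_castSucc, Fin.snoc_last, add_sub_cancel]
    · rw [Fin.snoc_last]
      exact ⟨sub_mem hc (sum_mem fun i _ => hFmem i), hrest⟩
    · rw [Fin.snoc_castSucc]
      exact ⟨hFmem i, hFann i⟩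

lemma finSumPeriodicFibers_of_periodic (hw : w ≠ 0) (hvw : lineProj v w = 0)
    (hper : Periodic c w) (hfin : (lineProj v '' support c).Finite) :
    FinSumPeriodicFibers v c := by
  classical
  set lines := hfin.toFinset
  let e := lines.equivFin
  let fiber (y : (Fin d → ℚ) ⧸ Submodule.span ℚ {intVecQ v}) : (Fin d → ℤ) → ℤ :=
    fun x => if lineProj v x = y then c x else 0
  refine ⟨lines.card, fun j => fiber (e.symm j), ?_, fun j => ⟨?_, w, hw, fun x => ?_⟩⟩
  · rw [Equiv.sum_comp e.symm fun y : lines => fiber y, Finset.sum_coe_sort lines fiber]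
    ext x
    simp only [fiber, Finset.sum_apply, Finset.sum_ite_eq]
    split_ifs with hx
    · rfl
    · exact not_not.1 fun hcx => hx (hfin.mem_toFinset.2 (mem_image_of_mem _ hcx))
  · obtain ⟨u, -, hu⟩ := hfin.mem_toFinset.1 (e.symm j).2
    exact ⟨u, fun x hx => lineProj_eq_iff.1 ((ite_ne_right_iff.1 hx).1.trans hu.symm)⟩
  · simp only [fiber, map_add, hvw, add_zero, hper x]

end Decomposition

end PaperFormal

namespace PaperFormal

/-- A sparse configuration annihilated by a product `φ₁ ⋯ φ_n` of line
polynomials in pairwise non-parallel directions `v₁, …, v_n` is a sum `c₁ + … + c_n` where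
each `c_i` is a finite sum of periodic `v_i`-fibers and `φ_i c_i = 0`. -/
theorem sparse_decomposition_into_periodic_fibers
    {d n : ℕ} (c : (Fin d → ℤ) → ℤ) (hconf : (Set.range c).Finite) (hsparse : Sparse c)
    (φ : Fin n → ((Fin d → ℤ) → ℤ)) (v : Fin n → (Fin d → ℤ))
    (hline : ∀ i, IsLinePoly (φ i) (v i))
    (hnp : ∀ i j, i ≠ j → NonParallel (v i) (v j))
    (hann : (List.ofFn φ).foldr polyApply c = 0) :
    ∃ cs : Fin n → ((Fin d → ℤ) → ℤ), c = ∑ i, cs i ∧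
      ∀ i, FinSumPeriodicFibers (v i) (cs i) ∧ polyApply (φ i) (cs i) = 0 := by
  obtain ⟨cs, hsum, hcs⟩ := exists_sum_of_polyApply_foldr_eq_zero hline hnp ⟨hconf, hsparse⟩ hann
  refine ⟨cs, hsum, fun i => ⟨?_, (hcs i).2⟩⟩
  obtain ⟨hmem, hi⟩ := hcs i
  obtain ⟨w, hw, hvw, hper⟩ := (hline i).exists_period hmem.1 hi
  exact finSumPeriodicFibers_of_periodic hw hvw hper ((hline i).finite_lines hmem hi)

end PaperFormal
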